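/- For every positive integer k and every nonnegative integer i, the number 1 + 2^(2^(4k)) + 2^(2^(4k+1)) + ... + 2^(2^(4k + 127 + 868i)) is divisible by 217 = 7·31. -/

import Mathlib

theorem base_term (m : ℕ) : 2 ^ (2 ^ (4 * m)) ≡ 2 [MOD 217] := by
  have h : 2 ^ (4 * m) ≡ 1 [MOD 15] := by
    rw [pow_mul]
    simpa using (show 2 ^ 4 ≡ 1 [MOD 15] by decide).pow m
  have h1 : 2 ^ (4 * m) = 15 * (2 ^ (4 * m) / 15) + 1 := by
    have h2 : 2 ^ (4 * m) % 15 = 1 := h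
    omega
  rw [h1, pow_succ, pow_mul]
  have h3 : (2 ^ 15) ≡ 1 [MOD 217] := by decide
  simpa using (h3.pow (2 ^ (4 * m) / 15)).mul_right 2

theorem gen_term (m r : ℕ) : 2 ^ (2 ^ (4 * m + r)) ≡ 2 ^ (2 ^ r) [MOD 217] := by
  rw [pow_add 2 (4 * m) r, pow_mul]
  exact (base_term m).pow _

theorem block_sum (k n : ℕ) :
    ∑ j ∈ Finset.range (4 * n), 2 ^ (2 ^ (4 * k + j)) ≡ 278 * n [MOD 217] := by
  induction n with
  | zero => simp [Nat.ModEq]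
  | succ n ih =>
    rw [show 4 * (n + 1) = 4 * n + 1 + 1 + 1 + 1 by ring]
    simp only [Finset.sum_range_succ]
    have h0 := gen_term (k + n) 0
    have h1 := gen_term (k + n) 1
    have h2 := gen_term (k + n) 2
    have h3 := gen_term (k + n) 3
    have e := (((ih.add h0).add h1).add h2).add h3
    rw [show 278 * (n + 1) = 278 * n + 2 ^ 2 ^ 0 + 2 ^ 2 ^ 1 + 2 ^ 2 ^ 2 + 2 ^ 2 ^ 3 by
      norm_num; ring]
    simpa only [mul_add, add_assoc, add_zero] using e

theorem stmt_10 (k i : ℕ) (hk : 0 < k) :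
    217 ∣ 1 + ∑ j ∈ Finset.range (127 + 868 * i + 1), 2 ^ (2 ^ (4 * k + j)) := by
  have h := block_sum k (32 + 217 * i)
  rw [show 127 + 868 * i + 1 = 4 * (32 + 217 * i) by ring]
  unfold Nat.ModEq at h
  omega
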